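/- Fix k ≥ 1. The average of H(A) over all A ∈ L_n^k, multiplied by n^{-k/(k+1)}, has limsup at most e as n → ∞; i.e., limsup_{n→∞} n^{-k/(k+1)} · (1/|L_n^k|) · Σ_{A ∈ L_n^k} H(A) ≤ e. -/

import Mathlib

open scoped Classical

/-- `A : [n]^{k+1} → {0,1}` is an order-`n` `k`-dimensional permutation if every
line (obtained by fixing all coordinates but one) contains exactly one `1`. -/
def IsHDPerm (n k : ℕ) (A : (Fin (k + 1) → Fin n) → Bool) : Prop :=
  ∀ (j : Fin (k + 1)) (x : Fin (k + 1) → Fin n),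
    ∃! t : Fin n, A (Function.update x j t) = true

/-- `L_n^k`: the finite set of order-`n` `k`-dimensional permutations. -/
noncomputable def HDPerms (n k : ℕ) : Finset ((Fin (k + 1) → Fin n) → Bool) :=
  Finset.univ.filter (fun A => IsHDPerm n k A)

/-- A monotone subsequence of length `m` in `A`: a sequence of `m` support
positions that is strictly monotone (in some direction) in every coordinate. -/
def IsMonoSub (n k m : ℕ) (A : (Fin (k + 1) → Fin n) → Bool)
    (α : Fin m → (Fin (k + 1) → Fin n)) : Prop :=
  (∀ i, A (α i) = true) ∧
    ∀ j : Fin (k + 1), StrictMono (fun i => α i j) ∨ StrictAnti (fun i => α i j)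

/-- `H(A)`: the maximum length of a monotone subsequence of `A`. -/
noncomputable def HLen (n k : ℕ) (A : (Fin (k + 1) → Fin n) → Bool) : ℕ :=
  sSup {m : ℕ | ∃ α : Fin m → (Fin (k + 1) → Fin n), IsMonoSub n k m A α}

/-- The strict partial order `<_c` on `[n]^{k+1}` induced by `c ∈ {0,1}^{k+1}`. -/
def cLT {n k : ℕ} (c : Fin (k + 1) → Bool) (x y : Fin (k + 1) → Fin n) : Prop :=
  ∀ i, if c i then x i < y i else y i < x i

/-- A `<_c`-monotone subsequence of length `m` in `A`: a `<_c`-chain of `m`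
support positions. -/
def IsCMonoSub (n k m : ℕ) (c : Fin (k + 1) → Bool)
    (A : (Fin (k + 1) → Fin n) → Bool) (α : Fin m → (Fin (k + 1) → Fin n)) : Prop :=
  (∀ i, A (α i) = true) ∧ ∀ i j : Fin m, i < j → cLT c (α i) (α j)

/-!
Permuting the symbols of each coordinate independently preserves `L_n^k`, so a uniformly random
element of `L_n^k` may be replaced by a uniformly random relabelling of a fixed one. A given
sequence of `m` support positions becomes monotone in a given coordinate with probability at most
`2 / m!`, independently over the `k + 1` coordinates, and there are at most `(n ^ k) ^ m` such
sequences. With `s = n ^ (k / (k + 1))` the union bound gives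
`P(m ≤ H) ≤ (2 * s ^ m / m!) ^ (k + 1)`, and since `m! ≥ (m / e) ^ m` this is exponentially small
as soon as `m ≥ c * s` with `c > e`.
-/

open Filter Topology

section Relabelling

variable {ι κ α β : Type*}

theorem perm_eq_of_strictMono_comp_eq [LinearOrder κ] [WellFoundedLT κ] [Preorder α]
    {f g : κ → α} (hf : StrictMono f) (hg : StrictMono g) {τ ρ : Equiv.Perm κ}
    (h : f ∘ τ = g ∘ ρ) : τ = ρ := by
  have hrange : Set.range f = Set.range g := by
    rw [← τ.surjective.range_comp f, h, ρ.surjective.range_comp g]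
  obtain rfl : f = g := (StrictMono.range_inj hf hg).1 hrange
  exact Equiv.ext fun i => hf.injective (congrFun h i)

theorem factorial_card_mul_card_strictMono_perm_le [Fintype κ] [LinearOrder κ] [Fintype α]
    [LinearOrder α] (b : κ → α) :
    (Fintype.card κ).factorial *
      Finset.card {σ : Equiv.Perm α | StrictMono fun i => σ (b i)} ≤
        (Fintype.card α).factorial := by
  by_cases hb : Function.Injective b
  · rw [← Fintype.card_perm, ← Fintype.card_perm, ← Finset.card_univ, ← Finset.card_univ,
      ← Finset.card_product]
    refine Finset.card_le_card_of_injOn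
      (fun p => p.2 * p.1.viaFintypeEmbedding ⟨b, hb⟩) (fun _ _ => Finset.mem_univ _) ?_
    rintro ⟨τ, σ⟩ hσ ⟨ρ, π⟩ hπ heq
    have hσ_mono : StrictMono fun i => σ (b i) := by simpa using hσ
    have hπ_mono : StrictMono fun i => π (b i) := by simpa using hπ
    have hcomp : (fun i => σ (b i)) ∘ τ = (fun i => π (b i)) ∘ ρ := by
      funext i
      have := Equiv.congr_fun heq ((⟨b, hb⟩ : κ ↪ α) i)
      simp only [Equiv.Perm.mul_apply, Equiv.Perm.viaFintypeEmbedding_apply_image] at this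
      exact this
    obtain rfl : τ = ρ := perm_eq_of_strictMono_comp_eq hσ_mono hπ_mono hcomp
    exact congrArg (Prod.mk τ) (mul_right_cancel heq)
  · have hempty : ∀ σ : Equiv.Perm α, ¬ StrictMono fun i => σ (b i) :=
      fun σ hσ => hb (Function.Injective.of_comp (f := σ) hσ.injective)
    simp [hempty]

theorem factorial_card_mul_card_strictAnti_perm_le [Fintype κ] [LinearOrder κ] [Fintype α]
    [LinearOrder α] (b : κ → α) :
    (Fintype.card κ).factorial *
      Finset.card {σ : Equiv.Perm α | StrictAnti fun i => σ (b i)} ≤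
        (Fintype.card α).factorial := by
  have hdual (σ : Equiv.Perm α) : (StrictAnti fun i => σ (b i)) ↔
      StrictMono fun i : κᵒᵈ => σ (b (OrderDual.ofDual i)) :=
    strictMono_comp_ofDual_iff.symm
  simpa only [hdual, Fintype.card_orderDual] using
    factorial_card_mul_card_strictMono_perm_le (κ := κᵒᵈ) fun i => b (OrderDual.ofDual i)

/-- The families `σ` of permutations, one for each coordinate, which turn the sequence `b` of
positions into a monotone one: in every coordinate `j` the sequence `i ↦ σ j (b i j)` is strictly
increasing or strictly decreasing. -/
noncomputable def monotoneRelabellings [Fintype ι] [DecidableEq ι] [Preorder κ] [Fintype α]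
    [LinearOrder α] (b : κ → ι → α) : Finset (ι → Equiv.Perm α) :=
  Fintype.piFinset fun j => {σ : Equiv.Perm α |
    (StrictMono fun i => σ (b i j)) ∨ StrictAnti fun i => σ (b i j)}

theorem mem_monotoneRelabellings [Fintype ι] [DecidableEq ι] [Preorder κ] [Fintype α]
    [LinearOrder α] {b : κ → ι → α} {σ : ι → Equiv.Perm α} :
    σ ∈ monotoneRelabellings b ↔
      ∀ j, (StrictMono fun i => σ j (b i j)) ∨ StrictAnti fun i => σ j (b i j) := by
  simp only [monotoneRelabellings, Fintype.mem_piFinset, Finset.mem_filter_univ]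

theorem factorial_pow_mul_card_monotoneRelabellings_le [Fintype ι] [DecidableEq ι] [Fintype κ]
    [LinearOrder κ] [Fintype α] [LinearOrder α] (b : κ → ι → α) :
    (Fintype.card κ).factorial ^ Fintype.card ι * (monotoneRelabellings b).card ≤
      (2 * (Fintype.card α).factorial) ^ Fintype.card ι := by
  rw [monotoneRelabellings, Fintype.card_piFinset, ← Finset.card_univ (α := ι),
    ← Finset.prod_const, ← Finset.prod_const, ← Finset.prod_mul_distrib]
  refine Finset.prod_le_prod' fun j _ => ?_
  rw [Finset.filter_or, two_mul]
  refine (Nat.mul_le_mul_left _ (Finset.card_union_le _ _)).trans ?_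
  rw [mul_add]
  convert add_le_add (factorial_card_mul_card_strictMono_perm_le fun i => b i j)
    (factorial_card_mul_card_strictAnti_perm_le fun i => b i j)

theorem card_mul_card_filter_eq_sum_card_filter {I X : Type*} [Fintype I]
    (g : I → Equiv.Perm X) (L : Finset X) (hL : ∀ i x, g i x ∈ L ↔ x ∈ L) (P : X → Prop)
    [DecidablePred P] :
    Fintype.card I * (L.filter P).card =
      ∑ x ∈ L, Finset.card {i | P (g i x)} := by
  have hcard (i : I) : (L.filter P).card = (L.filter fun x => P (g i x)).card :=
    (Finset.card_equiv (g i) fun x => by simp only [Finset.mem_filter, hL]).symm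
  calc Fintype.card I * (L.filter P).card
      = ∑ i : I, (L.filter fun x => P (g i x)).card := by
        simp only [← hcard, Finset.sum_const, Finset.card_univ, smul_eq_mul]
    _ = ∑ x ∈ L, Finset.card {i | P (g i x)} := by
        simp only [Finset.card_filter]
        exact Finset.sum_comm

/-- The action of a family of permutations of the symbols, one for each coordinate, on arrays
`A : (ι → α) → β`. The inverse permutations are applied to the positions, so the support of
`relabel σ A` is the coordinatewise image of the support of `A` under `σ`. -/
def relabel (σ : ι → Equiv.Perm α) : Equiv.Perm ((ι → α) → β) :=
  (Equiv.piCongrRight σ).arrowCongr (Equiv.refl β)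

theorem relabel_apply (σ : ι → Equiv.Perm α) (A : (ι → α) → β) (x : ι → α) :
    relabel σ A x = A fun j => (σ j).symm (x j) :=
  rfl

end Relabelling

section HighDimensionalPermutations

variable {n k m : ℕ} {A : (Fin (k + 1) → Fin n) → Bool}

theorem mem_HDPerms : A ∈ HDPerms n k ↔ IsHDPerm n k A := by
  simp only [HDPerms, Finset.mem_filter_univ]

theorem isHDPerm_relabel_iff (σ : Fin (k + 1) → Equiv.Perm (Fin n)) :
    IsHDPerm n k (relabel σ A) ↔ IsHDPerm n k A := by
  have hupdate (j : Fin (k + 1)) (x : Fin (k + 1) → Fin n) (t : Fin n) :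
      relabel σ A (Function.update x j t) =
        A (Function.update (fun i => (σ i).symm (x i)) j ((σ j).symm t)) := by
    rw [relabel_apply]
    exact congrArg A (funext fun i => Function.apply_update (fun i => (σ i).symm) x j t i)
  refine forall_congr' fun j => (Equiv.piCongrRight σ).symm.forall_congr fun x => ?_
  exact (σ j).symm.existsUnique_congr fun t => by rw [hupdate]; rfl

theorem IsHDPerm.eq_of_forall_ne (hA : IsHDPerm n k A) {x y : Fin (k + 1) → Fin n}
    (hx : A x = true) (hy : A y = true) (j : Fin (k + 1)) (hxy : ∀ i ≠ j, x i = y i) : x = y := by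
  have hy_eq : y = Function.update x j (y j) :=
    Function.eq_update_iff.2 ⟨rfl, fun i hi => (hxy i hi).symm⟩
  have hj : x j = y j :=
    (hA j x).unique (by rwa [Function.update_eq_self]) (by rwa [← hy_eq])
  rw [hy_eq, ← hj, Function.update_eq_self]

theorem IsHDPerm.card_support_le (hA : IsHDPerm n k A) :
    Finset.card {x | A x = true} ≤ n ^ k := by
  have hinj : Set.InjOn Fin.tail {x | A x = true} := by
    intro x hx y hy hxy
    refine hA.eq_of_forall_ne hx hy 0 fun i hi => ?_
    obtain ⟨i, rfl⟩ := Fin.exists_succ_eq.2 hi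
    exact congrFun hxy i
  simpa using Finset.card_le_card_of_injOn (s := {x | A x = true}) Fin.tail
    (fun _ _ => Finset.mem_univ _) (by simpa using hinj)

theorem IsMonoSub.length_le {a : Fin m → Fin (k + 1) → Fin n} (h : IsMonoSub n k m A a) :
    m ≤ n := by
  have hinj : Function.Injective fun i => a i 0 :=
    (h.2 0).elim StrictMono.injective StrictAnti.injective
  simpa using Fintype.card_le_of_injective _ hinj

theorem IsMonoSub.comp_castLE {l : ℕ} {a : Fin m → Fin (k + 1) → Fin n}
    (h : IsMonoSub n k m A a) (hl : l ≤ m) : IsMonoSub n k l A (a ∘ Fin.castLE hl) :=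
  ⟨fun _ => h.1 _, fun j => (h.2 j).imp (fun hj => hj.comp (Fin.strictMono_castLE hl))
    fun hj => hj.comp_strictMono (Fin.strictMono_castLE hl)⟩

theorem exists_isMonoSub_HLen (A : (Fin (k + 1) → Fin n) → Bool) :
    ∃ a, IsMonoSub n k (HLen n k A) A a :=
  Nat.sSup_mem (s := {m : ℕ | ∃ a : Fin m → Fin (k + 1) → Fin n, IsMonoSub n k m A a})
    ⟨0, Fin.elim0, fun i => i.elim0, fun _ => Or.inl fun i => i.elim0⟩
    ⟨n, fun _ ⟨_, ha⟩ => ha.length_le⟩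

theorem HLen_le (A : (Fin (k + 1) → Fin n) → Bool) : HLen n k A ≤ n :=
  let ⟨_, ha⟩ := exists_isMonoSub_HLen A
  ha.length_le

theorem exists_isMonoSub_of_le_HLen (hm : m ≤ HLen n k A) : ∃ a, IsMonoSub n k m A a :=
  let ⟨_, ha⟩ := exists_isMonoSub_HLen A
  ⟨_, ha.comp_castLE hm⟩

theorem exists_mem_monotoneRelabellings_of_le_HLen {σ : Fin (k + 1) → Equiv.Perm (Fin n)}
    (hm : m ≤ HLen n k (relabel σ A)) :
    ∃ b : Fin m → Fin (k + 1) → Fin n, (∀ i, A (b i) = true) ∧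
      σ ∈ monotoneRelabellings b := by
  obtain ⟨a, ha_support, ha_mono⟩ := exists_isMonoSub_of_le_HLen hm
  refine ⟨fun i j => (σ j).symm (a i j), ha_support, ?_⟩
  simpa only [mem_monotoneRelabellings, Equiv.apply_symm_apply] using ha_mono

theorem IsHDPerm.factorial_pow_mul_card_le_HLen_relabel_le (hA : IsHDPerm n k A) (m : ℕ) :
    m.factorial ^ (k + 1) * Finset.card
      {σ : Fin (k + 1) → Equiv.Perm (Fin n) | m ≤ HLen n k (relabel σ A)} ≤
        (n ^ k) ^ m * (2 * n.factorial) ^ (k + 1) := by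
  let supportSeqs : Finset (Fin m → Fin (k + 1) → Fin n) :=
    Fintype.piFinset fun _ => {x | A x = true}
  have hcover : Finset.filter (fun σ => m ≤ HLen n k (relabel σ A)) Finset.univ ⊆
      supportSeqs.biUnion monotoneRelabellings := by
    intro σ hσ
    obtain ⟨b, hb_support, hbσ⟩ :=
      exists_mem_monotoneRelabellings_of_le_HLen (Finset.mem_filter.1 hσ).2
    exact Finset.mem_biUnion.2 ⟨b, by simpa [supportSeqs] using hb_support, hbσ⟩
  calc m.factorial ^ (k + 1) * Finset.card {σ | m ≤ HLen n k (relabel σ A)}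
      ≤ m.factorial ^ (k + 1) * ∑ b ∈ supportSeqs, (monotoneRelabellings b).card :=
        Nat.mul_le_mul_left _ ((Finset.card_le_card hcover).trans Finset.card_biUnion_le)
    _ = ∑ b ∈ supportSeqs, m.factorial ^ (k + 1) * (monotoneRelabellings b).card :=
        Finset.mul_sum _ _ _
    _ ≤ ∑ _b ∈ supportSeqs, (2 * n.factorial) ^ (k + 1) :=
        Finset.sum_le_sum fun b _ => by
          simpa using factorial_pow_mul_card_monotoneRelabellings_le b
    _ = Finset.card {x | A x = true} ^ m * (2 * n.factorial) ^ (k + 1) := by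
        simp [supportSeqs]
    _ ≤ (n ^ k) ^ m * (2 * n.factorial) ^ (k + 1) :=
        Nat.mul_le_mul_right _ (Nat.pow_le_pow_left hA.card_support_le m)

theorem factorial_pow_mul_card_le_HLen_le (n k m : ℕ) :
    m.factorial ^ (k + 1) * ((HDPerms n k).filter fun A => m ≤ HLen n k A).card ≤
      (HDPerms n k).card * ((n ^ k) ^ m * 2 ^ (k + 1)) := by
  have haverage := card_mul_card_filter_eq_sum_card_filter
    (fun σ : Fin (k + 1) → Equiv.Perm (Fin n) => relabel σ) (HDPerms n k)
    (fun σ A => by rw [mem_HDPerms, mem_HDPerms, isHDPerm_relabel_iff]) (fun A => m ≤ HLen n k A)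
  have hcard : Fintype.card (Fin (k + 1) → Equiv.Perm (Fin n)) = n.factorial ^ (k + 1) := by
    simp [Fintype.card_perm]
  refine Nat.le_of_mul_le_mul_left ?_ (pow_pos n.factorial_pos (k + 1))
  calc n.factorial ^ (k + 1) *
        (m.factorial ^ (k + 1) * ((HDPerms n k).filter fun A => m ≤ HLen n k A).card)
      = ∑ A ∈ HDPerms n k, m.factorial ^ (k + 1) * Finset.card
          {σ : Fin (k + 1) → Equiv.Perm (Fin n) | m ≤ HLen n k (relabel σ A)} := by
        rw [mul_left_comm, ← hcard, haverage, Finset.mul_sum]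
    _ ≤ ∑ _A ∈ HDPerms n k, (n ^ k) ^ m * (2 * n.factorial) ^ (k + 1) :=
        Finset.sum_le_sum fun A hA =>
          (mem_HDPerms.1 hA).factorial_pow_mul_card_le_HLen_relabel_le m
    _ = n.factorial ^ (k + 1) * ((HDPerms n k).card * ((n ^ k) ^ m * 2 ^ (k + 1))) := by
        rw [Finset.sum_const, smul_eq_mul]
        ring

/-- The expectation of `H(A)` for `A` uniformly distributed on `L_n^k`. -/
noncomputable def meanHLen (n k : ℕ) : ℝ :=
  (∑ A ∈ HDPerms n k, (HLen n k A : ℝ)) / ((HDPerms n k).card : ℝ)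

theorem meanHLen_nonneg (n k : ℕ) : 0 ≤ meanHLen n k := by
  unfold meanHLen
  positivity

theorem sum_HLen_le (n k m : ℕ) :
    ∑ A ∈ HDPerms n k, HLen n k A ≤
      (HDPerms n k).card * m + n * ((HDPerms n k).filter fun A => m ≤ HLen n k A).card := by
  rw [Finset.card_filter, Finset.mul_sum, ← smul_eq_mul, ← Finset.sum_const,
    ← Finset.sum_add_distrib]
  refine Finset.sum_le_sum fun A _ => ?_
  have := HLen_le A
  split_ifs <;> omega

theorem meanHLen_le (n k m : ℕ) :
    meanHLen n k ≤ m + n * ((n ^ k : ℝ) ^ m * 2 ^ (k + 1) / (m.factorial : ℝ) ^ (k + 1)) := by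
  have hsum : ∑ A ∈ HDPerms n k, (HLen n k A : ℝ) ≤
      (HDPerms n k).card * m + n * ((HDPerms n k).filter fun A => m ≤ HLen n k A).card := by
    exact_mod_cast sum_HLen_le n k m
  have htail : (((HDPerms n k).filter fun A => m ≤ HLen n k A).card : ℝ) ≤
      (HDPerms n k).card * ((n ^ k : ℝ) ^ m * 2 ^ (k + 1) / (m.factorial : ℝ) ^ (k + 1)) := by
    rw [← mul_div_assoc, le_div_iff₀' (by positivity)]
    exact_mod_cast factorial_pow_mul_card_le_HLen_le n k m
  refine div_le_of_le_mul₀ (by positivity) (by positivity) (hsum.trans ?_)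
  calc ((HDPerms n k).card * m + n * ((HDPerms n k).filter fun A => m ≤ HLen n k A).card : ℝ)
      ≤ (HDPerms n k).card * m + n * ((HDPerms n k).card *
          ((n ^ k : ℝ) ^ m * 2 ^ (k + 1) / (m.factorial : ℝ) ^ (k + 1))) := by gcongr
    _ = _ := by ring

theorem meanHLen_le_of_pow_eq (hk : 1 ≤ k) {s : ℝ} (hs : s ^ (k + 1) = (n : ℝ) ^ k) (m : ℕ) :
    meanHLen n k ≤ m + (2 * (s * (s ^ m / m.factorial))) ^ (k + 1) := by
  have hn : (n : ℝ) ≤ s ^ (k + 1) := by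
    rw [hs]
    exact_mod_cast Nat.le_self_pow (Nat.one_le_iff_ne_zero.1 hk) n
  calc meanHLen n k
      ≤ m + n * ((n ^ k : ℝ) ^ m * 2 ^ (k + 1) / (m.factorial : ℝ) ^ (k + 1)) :=
        meanHLen_le n k m
    _ ≤ m + s ^ (k + 1) *
          ((n ^ k : ℝ) ^ m * 2 ^ (k + 1) / (m.factorial : ℝ) ^ (k + 1)) := by gcongr
    _ = m + (2 * (s * (s ^ m / m.factorial))) ^ (k + 1) := by
        rw [← hs, mul_pow, mul_pow, div_pow, pow_right_comm]
        ring

end HighDimensionalPermutations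

section Asymptotics

theorem pow_div_factorial_le_exp_div_pow {s c : ℝ} {m : ℕ} (hs : 0 ≤ s) (hc : 0 < c)
    (hm : c * s ≤ m) : s ^ m / m.factorial ≤ (Real.exp 1 / c) ^ m :=
  calc s ^ m / m.factorial ≤ (m / c) ^ m / m.factorial := by
        gcongr
        exact (le_div_iff₀' hc).2 hm
    _ = (m : ℝ) ^ m / m.factorial / c ^ m := by rw [div_pow, div_right_comm]
    _ ≤ Real.exp m / c ^ m := by
        gcongr
        exact Real.pow_div_factorial_le_exp m m.cast_nonneg m
    _ = (Real.exp 1 / c) ^ m := by rw [div_pow, Real.exp_one_pow]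

theorem tendsto_mul_pow_ceil_div_factorial {c : ℝ} (hc : Real.exp 1 < c) :
    Tendsto (fun s : ℝ => s * (s ^ ⌈c * s⌉₊ / (⌈c * s⌉₊.factorial : ℝ))) atTop (𝓝 0) := by
  have hc_pos : 0 < c := (Real.exp_pos 1).trans hc
  have hc_one : 1 ≤ c := (Real.one_le_exp zero_le_one).trans hc.le
  have hceil : Tendsto (fun s : ℝ => ⌈c * s⌉₊) atTop atTop :=
    tendsto_nat_ceil_atTop.comp (tendsto_id.const_mul_atTop hc_pos)
  have hgeometric : Tendsto (fun m : ℕ => m * (Real.exp 1 / c) ^ m) atTop (𝓝 0) :=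
    tendsto_self_mul_const_pow_of_lt_one (by positivity) ((div_lt_one hc_pos).2 hc)
  refine squeeze_zero' ?_ ?_ (hgeometric.comp hceil)
  · filter_upwards [eventually_ge_atTop 0] with s hs
    positivity
  · filter_upwards [eventually_ge_atTop 0] with s hs
    exact mul_le_mul ((le_mul_of_one_le_left hs hc_one).trans (Nat.le_ceil _))
      (pow_div_factorial_le_exp_div_pow hs hc_pos (Nat.le_ceil _)) (by positivity)
      (Nat.cast_nonneg _)

theorem tendsto_inv_mul_ceil_add_pow {c : ℝ} (hc : Real.exp 1 < c) (d : ℕ) :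
    Tendsto (fun s : ℝ => s⁻¹ *
      (⌈c * s⌉₊ + (2 * (s * (s ^ ⌈c * s⌉₊ / (⌈c * s⌉₊.factorial : ℝ)))) ^ d)) atTop (𝓝 c) := by
  have hmain : Tendsto (fun s : ℝ => (⌈c * s⌉₊ : ℝ) / s) atTop (𝓝 c) :=
    tendsto_nat_ceil_mul_div_atTop ((Real.exp_pos 1).trans hc).le
  have herror := tendsto_inv_atTop_zero.mul
    (((tendsto_mul_pow_ceil_div_factorial hc).const_mul 2).pow d)
  simpa [mul_add, div_eq_inv_mul] using hmain.add herror

theorem rpow_div_add_one_pow_succ {x : ℝ} (hx : 0 ≤ x) (k : ℕ) :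
    (x ^ ((k : ℝ) / ((k : ℝ) + 1))) ^ (k + 1) = x ^ k := by
  rw [← Real.rpow_mul_natCast hx, Nat.cast_succ, div_mul_cancel₀ _ k.cast_add_one_ne_zero,
    Real.rpow_natCast]

end Asymptotics

/-- `limsup_{n → ∞} n^{-k/(k+1)} E[H_n^k] ≤ e`. -/
theorem expectation_upper (k : ℕ) (hk : 1 ≤ k) :
    Filter.limsup (fun n : ℕ =>
      (n : ℝ) ^ (-((k : ℝ) / ((k : ℝ) + 1))) *
        ((∑ A ∈ HDPerms n k, (HLen n k A : ℝ)) / ((HDPerms n k).card : ℝ)))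
      Filter.atTop ≤ Real.exp 1 := by
  change limsup (fun n : ℕ => (n : ℝ) ^ (-((k : ℝ) / ((k : ℝ) + 1))) * meanHLen n k) atTop ≤ _
  refine le_of_forall_gt_imp_ge_of_dense fun c hc => ?_
  have hpow : Tendsto (fun n : ℕ => (n : ℝ) ^ ((k : ℝ) / ((k : ℝ) + 1))) atTop atTop :=
    (tendsto_rpow_atTop (by positivity)).comp tendsto_natCast_atTop_atTop
  have hbound := (tendsto_inv_mul_ceil_add_pow hc (k + 1)).comp hpow
  rw [← hbound.limsup_eq]
  refine limsup_le_limsup (Eventually.of_forall fun n => ?_)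
    (isCoboundedUnder_le_of_le atTop (x := 0) fun n =>
      mul_nonneg (by positivity) (meanHLen_nonneg n k)) hbound.isBoundedUnder_le
  simp only [Function.comp_apply, Real.rpow_neg n.cast_nonneg]
  exact mul_le_mul_of_nonneg_left
    (meanHLen_le_of_pow_eq hk (rpow_div_add_one_pow_succ n.cast_nonneg k) _) (by positivity)
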